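/- For all integers N ≥ m ≥ 2, the N-th Taylor coefficient B_{m,N} of Y_m at 0 is given by B_{m,N} = (2^{−(m−1)}/(m+1)) · Σ_{k=1}^{⌊m/2⌋} (−1)^{k+1} tan²(πk/(m+1)) · (1 + tan²(πk/(m+1)))^{−N+(m−1)/2} · 4^N. -/

import Mathlib

open scoped Real BigOperators

/-- The generating functions `X_m` of rooted planar trees of height at most `m`:
`X_0 = 0`, `X_1(g) = g`, `X_m(g) = g/(1 - X_{m-1}(g))`. -/
noncomputable def Xc : ℕ → ℂ → ℂ
  | 0, _ => 0
  | (m + 1), g => g / (1 - Xc m g)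

/-- `Y_m(g) = ∏_{k=1}^m X_k(g)`, the generating function of one-sided trees of height `m`. -/
noncomputable def Yc (m : ℕ) (g : ℂ) : ℂ := ∏ k ∈ Finset.Icc 1 m, Xc k g

/-- `B_{m,N}`, the `N`-th Taylor coefficient of `Y_m` at `0`. -/
noncomputable def Bcoef (m N : ℕ) : ℂ := iteratedDeriv N (Yc m) 0 / (N.factorial : ℂ)

/-!
Writing the continued fraction `X_m` as a quotient of its convergents gives `Y_m = g^m / F_m`, where
`F_{m+2} = F_{m+1} - g F_m` and `F_0 = F_1 = 1`. Since `(2x)^m F_m(1/(2x)²) = U_m(x)` is the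
Chebyshev polynomial of the second kind, the `⌊m/2⌋` points `1/(4 cos²(πk/(m+1)))` are simple zeros
of `F_m`, hence all of them, and `(m+1) T_{m+1} = x U_m - (1-x²) U_m'` yields the residues of `Y_m`
there. Partial fractions write `Y_m` as a sum of simple poles plus a polynomial of degree at most
`⌈m/2⌉`, which does not contribute to the `N`-th Taylor coefficient once `N > ⌈m/2⌉`.
-/

open Polynomial Filter Topology Finset

section SimplePoles

variable {K ι : Type*} [Field K] {s : Finset ι} {v : ι → K} {F : K[X]}

theorem degree_eq_card_of_isRoot (hF : F ≠ 0) (hdeg : F.natDegree ≤ #s) (hv : Set.InjOn v s)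
    (hroot : ∀ i ∈ s, F.IsRoot (v i)) : F.degree = #s :=
  (natDegree_le_iff_degree_le.mp hdeg).antisymm <| not_lt.mp fun hlt ↦
    hF <| eq_zero_of_degree_lt_of_eval_index_eq_zero s hv hlt hroot

theorem eq_C_leadingCoeff_mul_nodal (hF : F ≠ 0) (hdeg : F.natDegree ≤ #s) (hv : Set.InjOn v s)
    (hroot : ∀ i ∈ s, F.IsRoot (v i)) : F = C F.leadingCoeff * Lagrange.nodal s v := by
  have hdegree : F.degree = #s := degree_eq_card_of_isRoot hF hdeg hv hroot
  have hlead : F.leadingCoeff ≠ 0 := leadingCoeff_ne_zero.mpr hF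
  refine eq_of_degree_le_of_eval_index_eq s hv hdegree.le ?_ ?_ fun i hi ↦ ?_
  · rw [degree_C_mul hlead, Lagrange.degree_nodal, hdegree]
  · rw [leadingCoeff_mul, leadingCoeff_C, Lagrange.nodal_monic.leadingCoeff, mul_one]
  · rw [hroot i hi, eval_mul, Lagrange.eval_nodal_at_node hi, mul_zero]

theorem eval_div_eval_eq_sum_of_degree_lt {P : K[X]} (hP : P.degree < #s)
    (hdeg : F.natDegree ≤ #s) (hv : Set.InjOn v s) (hroot : ∀ i ∈ s, F.IsRoot (v i)) {z : K}
    (hz : F.eval z ≠ 0) :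
    P.eval z / F.eval z =
      ∑ i ∈ s, P.eval (v i) / F.derivative.eval (v i) * (z - v i)⁻¹ := by
  classical
  have hF : F ≠ 0 := by rintro rfl; exact hz eval_zero
  obtain ⟨c, hFc⟩ : ∃ c, F = C c * Lagrange.nodal s v :=
    ⟨_, eq_C_leadingCoeff_mul_nodal hF hdeg hv hroot⟩
  have hz_ne : ∀ i ∈ s, z ≠ v i := by rintro i hi rfl; exact hz (hroot i hi)
  have hP_eval := Lagrange.eval_interpolate_not_at_node (fun i ↦ P.eval (v i)) hz_ne
  rw [← Lagrange.eq_interpolate hv hP] at hP_eval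
  have hz_nodal : (Lagrange.nodal s v).eval z ≠ 0 := Lagrange.eval_nodal_not_at_node hz_ne
  rw [hP_eval, hFc, eval_mul, eval_C, mul_comm c, mul_div_mul_left _ _ hz_nodal, sum_div]
  refine sum_congr rfl fun i hi ↦ ?_
  rw [derivative_C_mul, eval_mul, eval_C, Lagrange.nodalWeight_eq_eval_derivative_nodal hi]
  ring

theorem eval_div_eval_eq_add_sum (P : K[X]) (hdeg : F.natDegree ≤ #s) (hv : Set.InjOn v s)
    (hroot : ∀ i ∈ s, F.IsRoot (v i)) {z : K} (hz : F.eval z ≠ 0) :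
    P.eval z / F.eval z = (P / F).eval z +
      ∑ i ∈ s, P.eval (v i) / F.derivative.eval (v i) * (z - v i)⁻¹ := by
  have hF : F ≠ 0 := by rintro rfl; exact hz eval_zero
  have heval (y : K) : P.eval y = F.eval y * (P / F).eval y + (P % F).eval y := by
    rw [← eval_mul, ← eval_add, EuclideanDomain.div_add_mod]
  have hmod : (P % F).degree < #s :=
    (EuclideanDomain.mod_lt P hF).trans_le (natDegree_le_iff_degree_le.mp hdeg)
  rw [heval z, add_div, mul_div_cancel_left₀ _ hz,
    eval_div_eval_eq_sum_of_degree_lt hmod hdeg hv hroot hz]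
  congr 1
  refine sum_congr rfl fun i hi ↦ ?_
  rw [heval (v i), hroot i hi, zero_mul, zero_add]

theorem degree_div_lt_of_degree_lt_add {P : K[X]} {n : WithBot ℕ} (hn : n ≠ ⊥) (hF : F ≠ 0)
    (hP : P.degree < F.degree + n) : (P / F).degree < n := by
  rcases lt_or_ge P.degree F.degree with hlt | hle
  · rw [(Polynomial.div_eq_zero_iff hF).mpr hlt, degree_zero]
    exact bot_lt_iff_ne_bot.mpr hn
  · rw [← degree_add_div hF hle] at hP
    exact lt_of_add_lt_add_left hP

end SimplePoles

section IteratedDeriv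

variable {𝕜 ι : Type*} [NontriviallyNormedField 𝕜]

theorem iteratedDeriv_polynomial_eval (P : 𝕜[X]) (N : ℕ) (x : 𝕜) :
    iteratedDeriv N (fun z ↦ P.eval z) x = (derivative^[N] P).eval x := by
  induction N generalizing x with
  | zero => simp
  | succ N ih =>
    rw [iteratedDeriv_succ, funext ih, Polynomial.deriv, Function.iterate_succ_apply']

theorem iteratedDeriv_inv_sub (N : ℕ) (a x : 𝕜) :
    iteratedDeriv N (fun z ↦ (z - a)⁻¹) x = (-1) ^ N * N.factorial / (x - a) ^ (N + 1) := by
  have h := congrFun (iter_deriv_inv_linear_sub N 1 a) x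
  simp only [one_mul, one_pow, mul_one] at h
  rw [iteratedDeriv_eq_iterate, h, show (-1 - N : ℤ) = -(N + 1 : ℕ) by push_cast; ring,
    zpow_neg, zpow_natCast, div_eq_mul_inv]

theorem iteratedDeriv_eval_div_eval {s : Finset ι} {v : ι → 𝕜} {F P : 𝕜[X]} {N : ℕ} {x : 𝕜}
    (hP : P.natDegree < #s + N) (hdeg : F.natDegree ≤ #s) (hv : Set.InjOn v s)
    (hroot : ∀ i ∈ s, F.IsRoot (v i)) (hx : F.eval x ≠ 0) :
    iteratedDeriv N (fun z ↦ P.eval z / F.eval z) x =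
      (-1) ^ N * N.factorial *
        ∑ i ∈ s, P.eval (v i) / F.derivative.eval (v i) / (x - v i) ^ (N + 1) := by
  have hF : F ≠ 0 := by rintro rfl; exact hx eval_zero
  have hquot : (P / F).degree < N := by
    refine degree_div_lt_of_degree_lt_add (WithBot.natCast_ne_bot N) hF ?_
    rw [degree_eq_card_of_isRoot hF hdeg hv hroot]
    exact_mod_cast degree_le_natDegree.trans_lt (Nat.cast_lt.mpr hP)
  have hpoles : (fun z ↦ P.eval z / F.eval z) =ᶠ[𝓝 x] fun z ↦ (P / F).eval z +
      ∑ i ∈ s, P.eval (v i) / F.derivative.eval (v i) * (z - v i)⁻¹ := by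
    filter_upwards [F.continuous.continuousAt.eventually_ne hx] with z hz
    exact eval_div_eval_eq_add_sum P hdeg hv hroot hz
  have hsmooth : ∀ i ∈ s, ContDiffAt 𝕜 N
      (fun z ↦ P.eval (v i) / F.derivative.eval (v i) * (z - v i)⁻¹) x := fun i hi ↦ by
    have hxi : x - v i ≠ 0 := sub_ne_zero.mpr (by rintro rfl; exact hx (hroot i hi))
    fun_prop (disch := assumption)
  have hpoly : ContDiffAt 𝕜 N (fun z ↦ (P / F).eval z) x := ((P / F).contDiff_aeval N).contDiffAt
  rw [hpoles.iteratedDeriv_eq, iteratedDeriv_fun_add hpoly (.sum hsmooth),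
    iteratedDeriv_polynomial_eval, iterate_derivative_eq_zero_of_degree_lt hquot, eval_zero,
    zero_add, iteratedDeriv_fun_sum hsmooth, mul_sum]
  refine sum_congr rfl fun i _ ↦ ?_
  rw [iteratedDeriv_const_mul_field, iteratedDeriv_inv_sub]
  ring

theorem iteratedDeriv_eval_div_eval_zero [CharZero 𝕜] {s : Finset ι} {v : ι → 𝕜} {F P : 𝕜[X]}
    {N : ℕ} (hP : P.natDegree < #s + N) (hdeg : F.natDegree ≤ #s) (hv : Set.InjOn v s)
    (hroot : ∀ i ∈ s, F.IsRoot (v i)) (hF₀ : F.eval 0 ≠ 0) :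
    iteratedDeriv N (fun z ↦ P.eval z / F.eval z) 0 / N.factorial =
      ∑ i ∈ s, -(P.eval (v i) / F.derivative.eval (v i) / v i ^ (N + 1)) := by
  have hfact : (N.factorial : 𝕜) ≠ 0 := Nat.cast_ne_zero.mpr N.factorial_ne_zero
  rw [iteratedDeriv_eval_div_eval hP hdeg hv hroot hF₀, mul_right_comm,
    mul_div_cancel_right₀ _ hfact, mul_sum]
  refine sum_congr rfl fun i _ ↦ ?_
  have hsign : ((-1 : 𝕜) ^ N) ≠ 0 := pow_ne_zero N (neg_ne_zero.mpr one_ne_zero)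
  rw [zero_sub, neg_pow (v i), pow_succ (-1 : 𝕜), mul_neg_one, neg_mul, div_neg, mul_neg,
    ← mul_div_assoc, mul_div_mul_left _ _ hsign]

end IteratedDeriv

section TreeDenom

/-- The denominators `F_m` of the convergents of the continued fraction defining `X_m`, so that
`X_{m+1} = g F_m / F_{m+1}`. -/
noncomputable def treeDenom (R : Type*) [CommRing R] : ℕ → R[X]
  | 0 => 1
  | 1 => 1
  | m + 2 => treeDenom R (m + 1) - X * treeDenom R m

theorem natDegree_treeDenom_le (R : Type*) [CommRing R] (m : ℕ) :
    (treeDenom R m).natDegree ≤ m / 2 := by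
  induction m using Nat.twoStepInduction with
  | zero | one => simp [treeDenom]
  | more m ih₀ ih₁ =>
    have hX : (X : R[X]).natDegree ≤ 1 := natDegree_X_le
    exact (natDegree_sub_le _ _).trans (max_le (by lia) (natDegree_mul_le.trans (by lia)))

theorem eval_zero_treeDenom (R : Type*) [CommRing R] (m : ℕ) : (treeDenom R m).eval 0 = 1 := by
  induction m using Nat.twoStepInduction with
  | zero | one => simp [treeDenom]
  | more m _ ih => simp [treeDenom, ih]

theorem eventually_eval_treeDenom_ne_zero (𝕜 : Type*) [NontriviallyNormedField 𝕜] (m : ℕ) :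
    ∀ᶠ z in 𝓝 (0 : 𝕜), (treeDenom 𝕜 m).eval z ≠ 0 :=
  (treeDenom 𝕜 m).continuous.continuousAt.eventually_ne
    (by rw [eval_zero_treeDenom]; exact one_ne_zero)

theorem Xc_succ_eventuallyEq (m : ℕ) : Xc (m + 1) =ᶠ[𝓝 0]
    fun z ↦ z * (treeDenom ℂ m).eval z / (treeDenom ℂ (m + 1)).eval z := by
  induction m with
  | zero => exact .of_forall fun z ↦ by simp [Xc, treeDenom]
  | succ m ih =>
    filter_upwards [ih, eventually_eval_treeDenom_ne_zero ℂ (m + 1)] with z hXc hne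
    have hrec : (treeDenom ℂ (m + 2)).eval z =
        (treeDenom ℂ (m + 1)).eval z - z * (treeDenom ℂ m).eval z := by simp [treeDenom]
    rw [Xc, hXc, one_sub_div hne, ← hrec, div_div_eq_mul_div]

theorem Yc_eventuallyEq (m : ℕ) : Yc m =ᶠ[𝓝 0] fun z ↦ z ^ m / (treeDenom ℂ m).eval z := by
  induction m with
  | zero => exact .of_forall fun z ↦ by simp [Yc, treeDenom]
  | succ m ih =>
    filter_upwards [ih, Xc_succ_eventuallyEq m, eventually_eval_treeDenom_ne_zero ℂ m]
      with z hYc hXc hne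
    rw [Yc, prod_Icc_succ_top (Nat.le_add_left 1 m), ← Yc, hYc, hXc, pow_succ]
    field_simp

theorem pow_mul_eval_treeDenom {K : Type*} [Field K] (n : ℕ) {x : K} (hx : 2 * x ≠ 0) :
    (2 * x) ^ n * (treeDenom K n).eval ((2 * x) ^ 2)⁻¹ = (Chebyshev.U K n).eval x := by
  induction n using Nat.twoStepInduction with
  | zero | one => simp [treeDenom]
  | more n ih₀ ih₁ =>
    push_cast at ih₁ ⊢
    simp only [treeDenom, Chebyshev.U_add_two, eval_sub, eval_mul, eval_X, eval_ofNat, ← ih₀, ← ih₁]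
    rw [mul_sub, ← mul_assoc _ _⁻¹, pow_add _ n 2, mul_inv_cancel_right₀ (pow_ne_zero 2 hx)]
    ring

theorem isRoot_treeDenom_of_isRoot_U {K : Type*} [Field K] {n : ℕ} {x : K} (hx : 2 * x ≠ 0)
    (hU : (Chebyshev.U K n).IsRoot x) : (treeDenom K n).IsRoot ((2 * x) ^ 2)⁻¹ := by
  rw [IsRoot, ← pow_mul_eval_treeDenom n hx] at hU
  exact (mul_eq_zero_iff_left (pow_ne_zero n hx)).mp hU

theorem eval_derivative_U_of_isRoot {𝕜 : Type*} [NontriviallyNormedField 𝕜] {n : ℕ} {x : 𝕜}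
    (hx : 2 * x ≠ 0) (hU : (Chebyshev.U 𝕜 n).IsRoot x) :
    (Chebyshev.U 𝕜 n).derivative.eval x =
      (2 * x) ^ n * ((treeDenom 𝕜 n).derivative.eval ((2 * x) ^ 2)⁻¹ * -(4 / (2 * x) ^ 3)) := by
  have hlin : HasDerivAt (fun y : 𝕜 ↦ 2 * y) 2 x := by
    simpa using (hasDerivAt_id x).const_mul (2 : 𝕜)
  have harg : HasDerivAt (fun y : 𝕜 ↦ ((2 * y) ^ 2)⁻¹) (-(4 / (2 * x) ^ 3)) x := by
    refine ((hlin.fun_pow 2).fun_inv (pow_ne_zero 2 hx)).congr_deriv ?_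
    generalize 2 * x = y at hx
    push_cast
    field_simp
    ring
  have hprod := (hlin.fun_pow n).fun_mul (((treeDenom 𝕜 n).hasDerivAt _).comp x harg)
  have hcheb : (fun y ↦ (Chebyshev.U 𝕜 n).eval y) =ᶠ[𝓝 x]
      fun y ↦ (2 * y) ^ n * (treeDenom 𝕜 n).eval ((2 * y) ^ 2)⁻¹ := by
    filter_upwards [hlin.continuousAt.eventually_ne hx] with y hy
    exact (pow_mul_eval_treeDenom n hy).symm
  rw [((Chebyshev.U 𝕜 n).hasDerivAt x).unique (hprod.congr_of_eventuallyEq hcheb),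
    Function.comp_apply, isRoot_treeDenom_of_isRoot_U hx hU, mul_zero, zero_add]

theorem eval_derivative_treeDenom_of_isRoot_U {𝕜 : Type*} [NontriviallyNormedField 𝕜] {n : ℕ}
    {x : 𝕜} (hx : 2 * x ≠ 0) (hU : (Chebyshev.U 𝕜 n).IsRoot x) :
    4 * (1 - x ^ 2) * (2 * x) ^ n * (treeDenom 𝕜 n).derivative.eval ((2 * x) ^ 2)⁻¹ =
      (2 * x) ^ 3 * ((n + 1) * (Chebyshev.T 𝕜 (n + 1)).eval x) := by
  have hTU : (n + 1) * (Chebyshev.T 𝕜 (n + 1)).eval x =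
      -((1 - x ^ 2) * (Chebyshev.U 𝕜 n).derivative.eval x) := by
    simpa [hU.eq_zero] using congrArg (eval x) (Chebyshev.add_one_mul_T_eq_poly_in_U (R := 𝕜) n)
  rw [hTU, eval_derivative_U_of_isRoot hx hU]
  generalize (treeDenom 𝕜 n).derivative.eval ((2 * x) ^ 2)⁻¹ = d
  generalize 2 * x = y at hx
  field_simp

end TreeDenom

section Poles

/-- The angle `πk/(m+1)`; the cosines of these angles are the zeros of the Chebyshev polynomial
`U_m`. -/
noncomputable def poleAngle (m k : ℕ) : ℝ := Real.pi * k / (m + 1)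

/-- The pole `1/(4 cos²(πk/(m+1)))` of `Y_m`. Every pole is obtained exactly once as `k` runs
through `1, …, ⌊m/2⌋`. -/
noncomputable def treePole (m k : ℕ) : ℂ := ((2 * (Real.cos (poleAngle m k) : ℂ)) ^ 2)⁻¹

variable {m k : ℕ}

theorem add_one_mul_poleAngle (m k : ℕ) : (m + 1) * poleAngle m k = k * Real.pi := by
  unfold poleAngle
  field_simp

theorem poleAngle_mem_Ioo (hk : k ∈ Icc 1 (m / 2)) : poleAngle m k ∈ Set.Ioo 0 (Real.pi / 2) := by
  obtain ⟨hk₁, hk₂⟩ := mem_Icc.mp hk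
  have hk_pos : (0 : ℝ) < k := by exact_mod_cast hk₁
  have hk_lt : (2 : ℝ) * k < m + 1 := by exact_mod_cast (by lia : 2 * k < m + 1)
  refine ⟨div_pos (mul_pos Real.pi_pos hk_pos) (by positivity), ?_⟩
  rw [poleAngle, div_lt_div_iff₀ (by positivity) two_pos]
  nlinarith [Real.pi_pos]

theorem cos_poleAngle_pos (hk : k ∈ Icc 1 (m / 2)) : 0 < Real.cos (poleAngle m k) :=
  Real.cos_pos_of_mem_Ioo ⟨by linarith [(poleAngle_mem_Ioo hk).1, Real.pi_pos],
    (poleAngle_mem_Ioo hk).2⟩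

theorem sin_poleAngle_pos (hk : k ∈ Icc 1 (m / 2)) : 0 < Real.sin (poleAngle m k) :=
  Real.sin_pos_of_mem_Ioo ⟨(poleAngle_mem_Ioo hk).1,
    by linarith [(poleAngle_mem_Ioo hk).2, Real.pi_pos]⟩

theorem two_mul_cos_poleAngle_ne_zero (hk : k ∈ Icc 1 (m / 2)) :
    2 * (Real.cos (poleAngle m k) : ℂ) ≠ 0 :=
  mul_ne_zero two_ne_zero (Complex.ofReal_ne_zero.mpr (cos_poleAngle_pos hk).ne')

theorem poleAngle_injective (m : ℕ) : Function.Injective (poleAngle m) := fun j k hjk ↦ by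
  have h := add_one_mul_poleAngle m j
  rw [hjk, add_one_mul_poleAngle] at h
  exact_mod_cast (mul_right_cancel₀ Real.pi_ne_zero h).symm

theorem injOn_treePole (m : ℕ) : Set.InjOn (treePole m) (Icc 1 (m / 2)) := by
  intro j hj k hk hjk
  have hsq : (2 * Real.cos (poleAngle m j)) ^ 2 = (2 * Real.cos (poleAngle m k)) ^ 2 := by
    exact_mod_cast inv_injective hjk
  have hj_pos := cos_poleAngle_pos hj
  have hk_pos := cos_poleAngle_pos hk
  have hcos : Real.cos (poleAngle m j) = Real.cos (poleAngle m k) := by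
    linarith [(pow_left_inj₀ (by positivity) (by positivity) two_ne_zero).mp hsq]
  have hmem {i : ℕ} (hi : i ∈ Icc 1 (m / 2)) : poleAngle m i ∈ Set.Icc 0 Real.pi :=
    ⟨(poleAngle_mem_Ioo hi).1.le, by linarith [(poleAngle_mem_Ioo hi).2, Real.pi_pos]⟩
  exact poleAngle_injective m (Real.injOn_cos (hmem hj) (hmem hk) hcos)

theorem isRoot_U_cos_poleAngle (hk : k ∈ Icc 1 (m / 2)) :
    (Chebyshev.U ℂ m).IsRoot (Real.cos (poleAngle m k)) := by
  have hsin : (Real.sin (poleAngle m k) : ℂ) ≠ 0 :=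
    Complex.ofReal_ne_zero.mpr (sin_poleAngle_pos hk).ne'
  have h : Real.sin ((m + 1) * poleAngle m k) = 0 := by
    rw [add_one_mul_poleAngle, Real.sin_nat_mul_pi]
  have hU := Chebyshev.U_complex_cos (poleAngle m k) m
  rw [← Complex.ofReal_cos, ← Complex.ofReal_sin] at hU
  refine (mul_eq_zero_iff_right hsin).mp (hU.trans ?_)
  exact_mod_cast h

theorem eval_T_cos_poleAngle (m k : ℕ) :
    (Chebyshev.T ℂ (m + 1)).eval (Real.cos (poleAngle m k) : ℂ) = (-1) ^ k := by
  have h : Real.cos ((m + 1) * poleAngle m k) = (-1) ^ k := by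
    rw [add_one_mul_poleAngle, Real.cos_nat_mul_pi]
  rw [Complex.ofReal_cos, Chebyshev.T_complex_cos]
  exact_mod_cast h

theorem isRoot_treeDenom_treePole (hk : k ∈ Icc 1 (m / 2)) :
    (treeDenom ℂ m).IsRoot (treePole m k) :=
  isRoot_treeDenom_of_isRoot_U (two_mul_cos_poleAngle_ne_zero hk) (isRoot_U_cos_poleAngle hk)

theorem eval_derivative_treeDenom_treePole (hk : k ∈ Icc 1 (m / 2)) :
    (treeDenom ℂ m).derivative.eval (treePole m k) =
      (2 * (Real.cos (poleAngle m k) : ℂ)) ^ 3 * ((m + 1) * (-1) ^ k) /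
        (4 * (Real.sin (poleAngle m k) : ℂ) ^ 2 * (2 * (Real.cos (poleAngle m k) : ℂ)) ^ m) := by
  have hcos := two_mul_cos_poleAngle_ne_zero hk
  have hsin : (Real.sin (poleAngle m k) : ℂ) ≠ 0 :=
    Complex.ofReal_ne_zero.mpr (sin_poleAngle_pos hk).ne'
  have hsin_sq : (Real.sin (poleAngle m k) : ℂ) ^ 2 = 1 - (Real.cos (poleAngle m k) : ℂ) ^ 2 := by
    exact_mod_cast Real.sin_sq (poleAngle m k)
  have hfour : (4 : ℂ) ≠ 0 := by norm_num
  refine eq_div_of_mul_eq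
    (mul_ne_zero (mul_ne_zero hfour (pow_ne_zero 2 hsin)) (pow_ne_zero m hcos)) ?_
  rw [mul_comm, hsin_sq, treePole,
    eval_derivative_treeDenom_of_isRoot_U hcos (isRoot_U_cos_poleAngle hk), eval_T_cos_poleAngle]

theorem neg_treePole_pow_div_eq (N : ℕ) (hk : k ∈ Icc 1 (m / 2)) :
    -(treePole m k ^ m / (treeDenom ℂ m).derivative.eval (treePole m k) /
        treePole m k ^ (N + 1)) =
      ((-1) ^ (k + 1) / (m + 1) * Real.tan (poleAngle m k) ^ 2 *
        ((2 * Real.cos (poleAngle m k)) ^ (2 * N + 1) / (2 * Real.cos (poleAngle m k)) ^ m) :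
          ℝ) := by
  have hcos := two_mul_cos_poleAngle_ne_zero hk
  have hm : (m + 1 : ℂ) ≠ 0 := Nat.cast_add_one_ne_zero m
  have htan : Real.tan (poleAngle m k) =
      2 * Real.sin (poleAngle m k) / (2 * Real.cos (poleAngle m k)) := by
    rw [Real.tan_eq_sin_div_cos, mul_div_mul_left _ _ two_ne_zero]
  rw [eval_derivative_treeDenom_treePole hk, treePole, htan]
  simp only [Complex.ofReal_mul, Complex.ofReal_div, Complex.ofReal_pow, Complex.ofReal_neg,
    Complex.ofReal_one, Complex.ofReal_add, Complex.ofReal_natCast, Complex.ofReal_ofNat, inv_pow]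
  generalize 2 * (Real.cos (poleAngle m k) : ℂ) = y at hcos
  rcases neg_one_pow_eq_or ℂ k with hsign | hsign <;>
    · simp only [pow_succ (-1 : ℂ), hsign]
      field_simp
      ring

end Poles

theorem Bcoef_eq_sum_treePole {m N : ℕ} (hN : m < m / 2 + N) :
    Bcoef m N = ∑ k ∈ Icc 1 (m / 2),
      -(treePole m k ^ m / (treeDenom ℂ m).derivative.eval (treePole m k) /
        treePole m k ^ (N + 1)) := by
  have hYc : Yc m =ᶠ[𝓝 0] fun z ↦ (X ^ m : ℂ[X]).eval z / (treeDenom ℂ m).eval z := by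
    simpa using Yc_eventuallyEq m
  rw [Bcoef, hYc.iteratedDeriv_eq, iteratedDeriv_eval_div_eval_zero (by simpa)
    (by simpa using natDegree_treeDenom_le ℂ m) (injOn_treePole m)
    (fun k ↦ isRoot_treeDenom_treePole) (by simp [eval_zero_treeDenom])]
  simp only [eval_pow, eval_X]

theorem one_add_tan_sq_rpow {θ : ℝ} (hθ : 0 < Real.cos θ) (r : ℝ) :
    (1 + Real.tan θ ^ 2) ^ r = Real.cos θ ^ (-2 * r) := by
  rw [Real.rpow_mul hθ.le, Real.rpow_neg hθ.le, Real.rpow_two,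
    ← Real.inv_one_add_tan_sq hθ.ne', inv_inv]

theorem two_rpow_mul_one_add_tan_sq_rpow {θ : ℝ} (hθ : 0 < Real.cos θ) (m N : ℕ) :
    2 ^ (-((m : ℝ) - 1)) * (1 + Real.tan θ ^ 2) ^ (-(N : ℝ) + ((m : ℝ) - 1) / 2) * 4 ^ N =
      (2 * Real.cos θ) ^ (2 * N + 1) / (2 * Real.cos θ) ^ m := by
  have hfour : (4 : ℝ) ^ N = 2 ^ (2 * N : ℝ) := by
    rw [Real.rpow_mul two_pos.le, Real.rpow_natCast]
    norm_num
  calc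
    _ = (2 : ℝ) ^ ((2 * N + 1 : ℕ) - m : ℝ) * Real.cos θ ^ ((2 * N + 1 : ℕ) - m : ℝ) := by
      rw [one_add_tan_sq_rpow hθ, hfour, mul_right_comm, ← Real.rpow_add two_pos]
      congr 2 <;> push_cast <;> ring
    _ = (2 * Real.cos θ) ^ ((2 * N + 1 : ℕ) - m : ℝ) := (Real.mul_rpow two_pos.le hθ.le).symm
    _ = _ := by
      rw [Real.rpow_sub (mul_pos two_pos hθ), Real.rpow_natCast, Real.rpow_natCast]

theorem Bcoef_formula_general (m N : ℕ) (hN : m < m / 2 + N) :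
    Bcoef m N =
      ((2 ^ (-((m : ℝ) - 1)) / (m + 1) *
        ∑ k ∈ Finset.Icc 1 (m / 2),
          (-1 : ℝ) ^ (k + 1) * Real.tan (Real.pi * k / (m + 1)) ^ 2 *
            (1 + Real.tan (Real.pi * k / (m + 1)) ^ 2) ^ (-(N : ℝ) + ((m : ℝ) - 1) / 2) *
            4 ^ N : ℝ) : ℂ) := by
  rw [Bcoef_eq_sum_treePole hN, mul_sum, Complex.ofReal_sum]
  refine sum_congr rfl fun k hk ↦ ?_
  rw [neg_treePole_pow_div_eq N hk,
    ← two_rpow_mul_one_add_tan_sq_rpow (cos_poleAngle_pos hk), poleAngle]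
  congr 1
  ring

/-- For all `N ≥ m ≥ 2`,
`B_{m,N} = (2^{−(m−1)}/(m+1)) · Σ_{k=1}^{⌊m/2⌋} (−1)^{k+1} tan²(πk/(m+1))
  · (1 + tan²(πk/(m+1)))^{−N+(m−1)/2} · 4^N`. -/
theorem Bcoef_formula (m N : ℕ) (hm : 2 ≤ m) (hN : m ≤ N) :
    Bcoef m N =
      ((2 ^ (-((m : ℝ) - 1)) / (m + 1) *
        ∑ k ∈ Finset.Icc 1 (m / 2),
          (-1 : ℝ) ^ (k + 1) * Real.tan (Real.pi * k / (m + 1)) ^ 2 *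
            (1 + Real.tan (Real.pi * k / (m + 1)) ^ 2) ^ (-(N : ℝ) + ((m : ℝ) - 1) / 2) *
            4 ^ N : ℝ) : ℂ) :=
  Bcoef_formula_general m N (by lia)
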